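/- arXiv:2102.04711 — 11 statements merged into one kernel-verified Lean document; each statement's English description precedes it below -/
import Mathlib

section
/- Let R be a commutative ring, I an ideal of R, and r ∈ R. Then r is integral over I if and only if there exists a positive integer n such that (I + (r))^n = I·(I + (r))^{n−1}, where (r) denotes the principal ideal generated by r. -/
/-- An element `r` of a commutative ring `R` is *integral over an ideal* `I` if there
exist `n ≥ 1` and elements `aᵢ ∈ Iⁱ` (for `1 ≤ i ≤ n`) such that
`r ^ n + a₁ r ^ (n-1) + ⋯ + aₙ₋₁ r + aₙ = 0`. -/
def IsIntegralOverIdeal {R : Type*} [CommRing R] (I : Ideal R) (r : R) : Prop :=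
  ∃ n : ℕ, 0 < n ∧ ∃ a : ℕ → R, (∀ i ∈ Finset.Icc 1 n, a i ∈ I ^ i) ∧
    r ^ n + ∑ i ∈ Finset.Icc 1 n, a i * r ^ (n - i) = 0

theorem aux_mem_sum {R : Type*} [CommRing R] (F : ℕ → Ideal R) (n : ℕ) :
    ∀ x ∈ ∑ i ∈ Finset.range n, F i,
      ∃ f : ℕ → R, (∀ i < n, f i ∈ F i) ∧ x = ∑ i ∈ Finset.range n, f i := by
  induction n with
  | zero => intro x hx; exact ⟨0, by simp, by simpa using hx⟩
  | succ n ih =>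
    intro x hx
    rw [Finset.sum_range_succ] at hx
    obtain ⟨y, hy, z, hz, rfl⟩ := Submodule.mem_sup.1 hx
    obtain ⟨f, hf, rfl⟩ := ih y hy
    refine ⟨fun i => if i < n then f i else z, ?_, ?_⟩
    · intro i hi
      by_cases h : i < n
      · simpa [h] using hf i h
      · obtain rfl : i = n := by omega
        simpa using hz
    · rw [Finset.sum_range_succ]
      simp only [lt_irrefl, if_false]
      congr 1
      apply Finset.sum_congr rfl
      intro i hi
      simp [Finset.mem_range.1 hi]

theorem aux_pow_le {R : Type*} [CommRing R] (I K : Ideal R) (n : ℕ) :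
    (I + K) ^ (n + 1) ≤ I * (I + K) ^ n + K ^ (n + 1) := by
  induction n with
  | zero => simp
  | succ n ih =>
    have h1 : (I + K) ^ (n + 2) = I * (I + K) ^ (n + 1) + K * (I + K) ^ (n + 1) := by ring
    rw [h1]
    refine sup_le le_sup_left ?_
    refine (Ideal.mul_mono_right ih).trans ?_
    rw [mul_add]
    refine sup_le (le_trans ?_ le_sup_left) (le_trans (le_of_eq (by ring)) le_sup_right)
    calc K * (I * (I + K) ^ n) = I * (K * (I + K) ^ n) := by ring
      _ ≤ I * ((I + K) * (I + K) ^ n) :=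
        Ideal.mul_mono_right (Ideal.mul_mono_left le_sup_right)
      _ = _ := by ring

theorem integral_over_ideal_iff_pow_eq {R : Type*} [CommRing R] (I : Ideal R) (r : R) :
    IsIntegralOverIdeal I r ↔
      ∃ n : ℕ, 0 < n ∧ (I + Ideal.span {r}) ^ n = I * (I + Ideal.span {r}) ^ (n - 1) := by
  have hI : I ≤ I + Ideal.span {r} := le_sup_left
  have hr : r ∈ I + Ideal.span {r} :=
    (le_sup_right : Ideal.span {r} ≤ I + Ideal.span {r}) (Ideal.mem_span_singleton_self r)
  constructor
  · rintro ⟨n, hn, a, ha, h⟩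
    refine ⟨n, hn, ?_⟩
    obtain ⟨m, rfl⟩ : ∃ m, n = m + 1 := ⟨n - 1, by omega⟩
    simp only [Nat.add_sub_cancel]
    apply le_antisymm
    · refine (aux_pow_le I _ m).trans (sup_le le_rfl ?_)
      rw [Ideal.span_singleton_pow, Ideal.span_singleton_le_iff_mem, eq_neg_of_add_eq_zero_left h]
      refine neg_mem (sum_mem fun i hi => ?_)
      have hi' := Finset.mem_Icc.1 hi
      obtain ⟨j, rfl⟩ : ∃ j, i = j + 1 := ⟨i - 1, by omega⟩
      have h2 := Ideal.mul_mem_mul (ha _ hi) (Ideal.pow_mem_pow hr (m + 1 - (j + 1)))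
      refine (?_ : I ^ (j + 1) * (I + Ideal.span {r}) ^ (m + 1 - (j + 1)) ≤ _) h2
      rw [pow_succ', mul_assoc]
      refine Ideal.mul_mono_right ((Ideal.mul_mono_left (Ideal.pow_right_mono hI j)).trans ?_)
      rw [← pow_add]
      exact le_of_eq (by congr 1; omega)
    · rw [pow_succ']
      exact Ideal.mul_mono_left hI
  · rintro ⟨n, hn, h⟩
    obtain ⟨m, rfl⟩ : ∃ m, n = m + 1 := ⟨n - 1, by omega⟩
    simp only [Nat.add_sub_cancel] at h
    have h1 := Ideal.pow_mem_pow hr (m + 1)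
    rw [h, add_pow, Finset.mul_sum] at h1
    obtain ⟨f, hf, hs⟩ := aux_mem_sum _ _ _ h1
    have key : ∀ i, ∃ b, i < m + 1 → b ∈ I ^ (i + 1) ∧ f i = b * r ^ (m - i) := by
      intro i
      by_cases hi : i < m + 1
      · have h3 : f i ∈ I ^ (i + 1) * Ideal.span {r ^ (m - i)} := by
          have h4 := hf i hi
          rw [← mul_assoc, ← mul_assoc, ← pow_succ', Ideal.span_singleton_pow] at h4
          exact Ideal.mul_le_left h4
        obtain ⟨b, hb, e⟩ := Ideal.mem_mul_span_singleton.1 h3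
        exact ⟨b, fun _ => ⟨hb, e.symm⟩⟩
      · exact ⟨0, fun h => absurd h hi⟩
    choose b hb using key
    refine ⟨m + 1, hn, fun i => - b (i - 1), ?_, ?_⟩
    · intro i hi
      have hi' := Finset.mem_Icc.1 hi
      obtain ⟨j, rfl⟩ : ∃ j, i = j + 1 := ⟨i - 1, by omega⟩
      exact neg_mem (hb j (by omega)).1
    · rw [hs, ← Finset.Ico_add_one_right_eq_Icc, Finset.sum_Ico_eq_sum_range,
        Nat.add_sub_cancel, ← Finset.sum_add_distrib]
      apply Finset.sum_eq_zero
      intro i hi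
      beta_reduce
      rw [(hb i (Finset.mem_range.1 hi)).2, Nat.add_sub_cancel_left,
        show m + 1 - (1 + i) = m - i by omega]
      ring
end

section
/- Let R be an integral domain with fraction field K, let P be a prime ideal of R, and let a be a nonzero element of K. Then P·R[a] ≠ R[a] or P·R[a⁻¹] ≠ R[a⁻¹], where R[a] denotes the subring of K generated by R and a, and P·R[a] denotes the ideal of R[a] generated by the image of P. -/
lemma adjoin_aux {R K : Type*} [CommRing R] [Field K]
    [Algebra R K] (P : Ideal R) (V : ValuationSubring K)
    (hR : ∀ r : R, algebraMap R K r ∈ V)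
    (hV : ∀ r ∈ P, algebraMap R K r ∈ V.nonunits) (b : K) (hb : b ∈ V) :
    Ideal.map (algebraMap R (Algebra.adjoin R ({b} : Set K))) P ≠ ⊤ := by
  have key : ∀ x ∈ Algebra.adjoin R ({b} : Set K), x ∈ V := by
    intro x hx
    induction hx using Algebra.adjoin_induction with
    | mem x hx => rw [Set.mem_singleton_iff.1 hx]; exact hb
    | algebraMap r => exact hR r
    | add x y _ _ hx hy => exact V.add_mem _ _ hx hy
    | mul x y _ _ hx hy => exact V.mul_mem _ _ hx hy
  let f : Algebra.adjoin R ({b} : Set K) →+* V :=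
    { toFun := fun x => ⟨x.1, key x.1 x.2⟩
      map_one' := rfl
      map_mul' := fun _ _ => rfl
      map_zero' := rfl
      map_add' := fun _ _ => rfl }
  intro h
  have hle : Ideal.map (algebraMap R (Algebra.adjoin R ({b} : Set K))) P ≤
      (IsLocalRing.maximalIdeal V).comap f := by
    rw [Ideal.map_le_iff_le_comap]
    intro r hr
    have h1 := hV r hr
    rw [ValuationSubring.mem_nonunits_iff_exists_mem_maximalIdeal] at h1
    obtain ⟨_, h2⟩ := h1
    exact h2
  rw [h, top_le_iff] at hle
  exact Ideal.comap_ne_top f (Ideal.IsPrime.ne_top inferInstance) hle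

/-- Let `R` be an integral domain with fraction field `K`, `P` a prime ideal of `R`
and `a` a nonzero element of `K`. Then the extension of `P` to `R[a]` is proper, or
the extension of `P` to `R[a⁻¹]` is proper. -/
theorem extension_to_adjoin_proper {R K : Type*} [CommRing R] [IsDomain R] [Field K]
    [Algebra R K] [IsFractionRing R K] (P : Ideal R) (hP : P.IsPrime) (a : K)
    (ha : a ≠ 0) :
    Ideal.map (algebraMap R (Algebra.adjoin R ({a} : Set K))) P ≠ ⊤ ∨
      Ideal.map (algebraMap R (Algebra.adjoin R ({a⁻¹} : Set K))) P ≠ ⊤ := by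
  have hinj : Function.Injective (algebraMap R K) := IsFractionRing.injective R K
  let e : R ≃+* (algebraMap R K).range := RingEquiv.ofBijective (algebraMap R K).rangeRestrict
    ⟨fun x y h => hinj (congrArg Subtype.val h), (algebraMap R K).rangeRestrict_surjective⟩
  have hI : P.comap (e.symm : (algebraMap R K).range →+* R) ≠ ⊤ :=
    Ideal.comap_ne_top _ hP.ne_top
  obtain ⟨V, hAV, hV⟩ := Ideal.image_subset_nonunits_valuationSubring _ hI
  have hR : ∀ r : R, algebraMap R K r ∈ V := fun r => hAV ⟨r, rfl⟩
  have hN : ∀ r ∈ P, algebraMap R K r ∈ V.nonunits := by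
    intro r hr
    refine hV ⟨e r, ?_, rfl⟩
    simpa using hr
  rcases V.mem_or_inv_mem a with h | h
  · exact Or.inl (adjoin_aux P V hR hN a h)
  · exact Or.inr (adjoin_aux P V hR hN _ h)
end

section
/- Let R be an integral domain with fraction field K and let v be a valuation on K that is nonnegative on R. If I is a proper v-ideal of R, then the radical √I = {x ∈ R : x^n ∈ I for some positive integer n} is a prime ideal of R. -/
/-- For a valuation `v` on `K` which is nonnegative on a subring `R` (in multiplicative
notation: `v (algebraMap R K r) ≤ 1` for all `r`), the canonical ring homomorphism from
`R` into the valuation ring `{x : K | v x ≤ 1}` of `v`. -/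
def Valuation.nonnegHom {R K Γ₀ : Type*} [CommRing R] [Field K] [Algebra R K]
    [LinearOrderedCommGroupWithZero Γ₀] (v : Valuation K Γ₀)
    (hv : ∀ r : R, v (algebraMap R K r) ≤ 1) : R →+* v.integer where
  toFun r := ⟨algebraMap R K r, hv r⟩
  map_one' := by ext; simp
  map_mul' x y := by ext; simp
  map_zero' := by ext; simp
  map_add' x y := by ext; simp

/-- An ideal `I` of `R` is a `v`-ideal if it is the contraction of some ideal of the
valuation ring of `v`. -/
def IsVIdeal {R K Γ₀ : Type*} [CommRing R] [Field K] [Algebra R K]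
    [LinearOrderedCommGroupWithZero Γ₀] (v : Valuation K Γ₀)
    (hv : ∀ r : R, v (algebraMap R K r) ≤ 1) (I : Ideal R) : Prop :=
  ∃ J : Ideal v.integer, I = J.comap (Valuation.nonnegHom v hv)

/-- The radical of a proper `v`-ideal is a prime ideal. -/
theorem radical_vIdeal_prime {R K Γ₀ : Type*} [CommRing R] [IsDomain R] [Field K]
    [Algebra R K] [IsFractionRing R K] [LinearOrderedCommGroupWithZero Γ₀]
    (v : Valuation K Γ₀) (hv : ∀ r : R, v (algebraMap R K r) ≤ 1) (I : Ideal R)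
    (hproper : I ≠ ⊤) (hI : IsVIdeal v hv I) : I.radical.IsPrime := by
  obtain ⟨J, rfl⟩ := hI
  have key : ∀ a b : R, v (algebraMap R K b) ≤ v (algebraMap R K a) →
      a ∈ J.comap (Valuation.nonnegHom v hv) → b ∈ J.comap (Valuation.nonnegHom v hv) := by
    intro a b hab ha
    obtain ⟨c, hc⟩ := (Valuation.integer.integers v).dvd_of_le
      (x := Valuation.nonnegHom v hv b) (y := Valuation.nonnegHom v hv a) hab
    rw [Ideal.mem_comap] at ha ⊢
    rw [hc]
    exact J.mul_mem_right c ha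
  have key2 : ∀ x y : R, v (algebraMap R K x) ≤ v (algebraMap R K y) →
      x * y ∈ (J.comap (Valuation.nonnegHom v hv)).radical →
      x ∈ (J.comap (Valuation.nonnegHom v hv)).radical := by
    rintro x y hxy ⟨n, hn⟩
    refine ⟨2 * n, key _ _ ?_ hn⟩
    rw [pow_mul]
    simp only [map_pow, map_mul, pow_two]
    gcongr
  refine ⟨fun h => hproper (Ideal.radical_eq_top.mp h), ?_⟩
  intro x y hxy
  rcases le_total (v (algebraMap R K x)) (v (algebraMap R K y)) with h | h
  · exact Or.inl (key2 x y h hxy)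
  · exact Or.inr (key2 y x h (by rwa [mul_comm]))
end

section
/- Let R be an integral domain with fraction field K and let I be an ideal of R. Then the integral closure Ī of I equals the intersection, over all valuation overrings V of R in K, of (I·V) ∩ R, where I·V is the ideal of V generated by I. -/
open Polynomial

theorem isIntegralOverIdeal_of_poly {R K : Type*} [CommRing R]
    [IsDomain R] [Field K] [Algebra R K] [IsFractionRing R K] (I : Ideal R) (r : R) (hr : r ≠ 0)
    (p : R[X]) (hp : p ∈ reesAlgebra I) (h0 : p.coeff 0 = 0)
    (h1 : aeval (algebraMap R K r)⁻¹ p = 1) : IsIntegralOverIdeal I r := by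
  have hr' : algebraMap R K r ≠ 0 := by
    simpa using hr
  have hn : 0 < p.natDegree := by
    rcases Nat.eq_zero_or_pos p.natDegree with h | h
    · rw [Polynomial.eq_C_of_natDegree_eq_zero h, h0] at h1
      simp at h1
    · exact h
  refine ⟨p.natDegree, hn, fun i => - p.coeff i, fun i _ => neg_mem (hp i), ?_⟩
  apply IsFractionRing.injective R K
  rw [aeval_eq_sum_range, Finset.range_eq_Ico, Finset.sum_eq_sum_Ico_succ_bot (by omega), h0] at h1
  have h2 : Finset.Icc 1 p.natDegree = Finset.Ico (0 + 1) (p.natDegree + 1) := by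
    ext; simp
  rw [h2]
  have h3 := congrArg (fun x => x * algebraMap R K r ^ p.natDegree) h1
  simp only [zero_smul, zero_add, Finset.sum_mul, one_mul] at h3
  simp only [map_add, map_pow, map_sum, map_mul, map_neg, map_zero, neg_mul,
    Finset.sum_neg_distrib, zero_add]
  rw [← h3, ← sub_eq_add_neg, sub_eq_zero]
  refine Finset.sum_congr rfl fun i hi => ?_
  have hi' : i ≤ p.natDegree := by simp at hi; omega
  rw [Algebra.smul_def, mul_assoc]
  congr 1
  rw [pow_sub₀ _ hr' hi', inv_pow, mul_comm]

theorem val_lt_of_mem_span {R K : Type*} [CommRing R] [Field K] [Algebra R K] (I : Ideal R)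
    (V : ValuationSubring K) (γ : V.ValueGroup) (hγ : 0 < γ)
    (h : ∀ a ∈ I, V.valuation (algebraMap R K a) < γ) (x : V)
    (hx : x ∈ Ideal.span {x : V | ∃ a ∈ I, (x : K) = algebraMap R K a}) :
    V.valuation (x : K) < γ := by
  induction hx using Submodule.span_induction with
  | mem x hx =>
    obtain ⟨a, ha, hxa⟩ := hx
    rw [hxa]; exact h a ha
  | zero => simpa using hγ
  | add x y _ _ hx hy =>
    exact Valuation.map_add_lt _ hx hy
  | smul c x _ hx =>
    rw [smul_eq_mul, show ((c * x : V) : K) = (c : K) * (x : K) from rfl, map_mul]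
    exact lt_of_le_of_lt (mul_le_of_le_one_left' (V.valuation_le_one c)) hx

theorem val_lt_pow {R K : Type*} [CommRing R] [Field K] [Algebra R K] (I : Ideal R)
    (V : ValuationSubring K) (γ : V.ValueGroup) (hγ : 0 < γ)
    (h : ∀ a ∈ I, V.valuation (algebraMap R K a) < γ) (i : ℕ) :
    ∀ a ∈ I ^ (i + 1), V.valuation (algebraMap R K a) < γ ^ (i + 1) := by
  induction i with
  | zero => simpa using h
  | succ i ih =>
    intro a ha
    rw [pow_succ] at ha
    induction ha using Submodule.mul_induction_on' with
    | mem_mul_mem m hm n hn =>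
      rw [map_mul, map_mul, pow_succ γ (i + 1)]
      exact mul_lt_mul'' (ih m hm) (h n hn) zero_le zero_le
    | add x _ y _ hx hy =>
      rw [map_add]; exact Valuation.map_add_lt _ hx hy


/-- The integral closure of an ideal `I` of an integral domain `R` equals the
intersection, over all valuation overrings `V` of `R` inside the fraction field `K`,
of the contractions `(I·V) ∩ R` of the extensions of `I`. -/
theorem integral_closure_ideal_eq_iInter_valuation_overrings {R K : Type*} [CommRing R]
    [IsDomain R] [Field K] [Algebra R K] [IsFractionRing R K] (I : Ideal R) (r : R) :
    IsIntegralOverIdeal I r ↔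
      ∀ (V : ValuationSubring K) (hV : ∀ s : R, algebraMap R K s ∈ V),
        (⟨algebraMap R K r, hV r⟩ : V) ∈
          Ideal.span {x : V | ∃ a ∈ I, (x : K) = algebraMap R K a} := by
  by_cases hr : r = 0
  · subst hr
    refine ⟨fun _ V hV => ?_, fun _ => ⟨1, one_pos, fun _ => 0, by simp, by simp⟩⟩
    have : (⟨algebraMap R K 0, hV 0⟩ : V) = 0 := Subtype.ext (by simp)
    rw [this]; exact zero_mem _
  have hr' : algebraMap R K r ≠ 0 := by
    simpa using hr
  constructor
  · rintro ⟨n, hn, a, ha, heq⟩ V hV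
    have hγ : 0 < V.valuation (algebraMap R K r) := by
      rw [Valuation.pos_iff]; exact hr'
    by_cases h : ∀ a ∈ I, V.valuation (algebraMap R K a) < V.valuation (algebraMap R K r)
    · exfalso
      have h1 : V.valuation (∑ i ∈ Finset.Icc 1 n, algebraMap R K (a i * r ^ (n - i)))
          < V.valuation (algebraMap R K r) ^ n := by
        refine Valuation.map_sum_lt _ (pow_pos hγ n).ne' fun i hi => ?_
        have hi' := Finset.mem_Icc.mp hi
        obtain ⟨j, rfl⟩ : ∃ j, i = j + 1 := ⟨i - 1, by omega⟩
        have h2 := val_lt_pow I V _ hγ h j (a (j + 1)) (ha _ hi)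
        rw [map_mul, map_mul, map_pow, map_pow]
        calc _ < V.valuation (algebraMap R K r) ^ (j + 1) *
              V.valuation (algebraMap R K r) ^ (n - (j + 1)) :=
              mul_lt_mul_of_pos_right h2 (pow_pos hγ _)
          _ = _ := by rw [← pow_add]; congr 1; omega
      have h2 := congrArg (algebraMap R K) heq
      rw [map_add, map_zero, map_sum, add_eq_zero_iff_eq_neg] at h2
      have h3 := congrArg V.valuation h2
      rw [Valuation.map_neg, map_pow, map_pow] at h3
      rw [← h3] at h1
      exact lt_irrefl _ h1
    · push Not at h
      obtain ⟨b, hb, hle⟩ := h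
      have hb0 : algebraMap R K b ≠ 0 := by
        intro h0
        rw [h0, map_zero] at hle
        exact absurd hle (not_le.mpr hγ)
      have hc : algebraMap R K r / algebraMap R K b ∈ V := by
        rw [← V.valuation_le_one_iff, map_div₀]
        exact div_le_one_of_le₀ hle zero_le
      have : (⟨algebraMap R K r, hV r⟩ : V) =
          ⟨_, hc⟩ * ⟨algebraMap R K b, hV b⟩ := by
        apply Subtype.ext
        simp [hb0]
      rw [this]
      exact Ideal.mul_mem_left _ _ (Ideal.subset_span ⟨b, hb, rfl⟩)
  · intro H
    let f : R[X] →ₐ[R] K := aeval (algebraMap R K r)⁻¹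
    let A : Subring K := ((reesAlgebra I).map f).toSubring
    let J : Ideal A :=
      { carrier := {x | ∃ p ∈ reesAlgebra I, p.coeff 0 = 0 ∧ f p = x}
        zero_mem' := ⟨0, zero_mem _, by simp, by simp⟩
        add_mem' := by
          rintro x y ⟨p, hp, hp0, hpx⟩ ⟨q, hq, hq0, hqx⟩
          exact ⟨p + q, add_mem hp hq, by simp [hp0, hq0], by simp [hpx, hqx]⟩
        smul_mem' := by
          rintro ⟨c, q, hq, hqc⟩ x ⟨p, hp, hp0, hpx⟩
          refine ⟨q * p, mul_mem hq hp, by simp [hp0], ?_⟩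
          rw [map_mul, hpx]
          simp only [smul_eq_mul, Subring.coe_mul]
          rw [← hqc]; rfl }
    by_cases hJ : J = ⊤
    · have h1 : (1 : A) ∈ J := hJ ▸ Submodule.mem_top
      obtain ⟨p, hp, hp0, hp1⟩ := h1
      exact isIntegralOverIdeal_of_poly (K := K) I r hr p hp hp0 (by simpa [f] using hp1)
    · exfalso
      obtain ⟨V, hAV, hV⟩ := Ideal.image_subset_nonunits_valuationSubring J hJ
      have hRV : ∀ s : R, algebraMap R K s ∈ V := fun s =>
        hAV ⟨C s, (reesAlgebra I).algebraMap_mem s, by simp [f]⟩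
      have hγ : 0 < V.valuation (algebraMap R K r) := by
        rw [Valuation.pos_iff]; exact hr'
      refine lt_irrefl _ (val_lt_of_mem_span I V _ hγ (fun a ha => ?_) _ (H V hRV))
      have hm : monomial 1 a ∈ reesAlgebra I :=
        reesAlgebra.monomial_mem.mpr (by simpa using ha)
      have hfm : f (monomial 1 a) = algebraMap R K a / algebraMap R K r := by
        simp [f, div_eq_mul_inv, aeval_monomial]
      have h2 : algebraMap R K a / algebraMap R K r ∈ V.nonunits :=
        hV ⟨⟨_, _, hm, hfm⟩, ⟨_, hm, by simp [coeff_monomial], hfm⟩, rfl⟩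
      rw [ValuationSubring.mem_nonunits_iff, map_div₀] at h2
      exact (div_lt_one₀ hγ).mp h2
end

section
/- Let R be an integral domain with fraction field K, let v be a valuation on K nonnegative on R, and let I be a v-ideal of R. If A and B are subsets of R such that ab ∈ I for all a ∈ A and b ∈ B, then {a² : a ∈ A} ⊆ I or {b² : b ∈ B} ⊆ I. -/
/-- If `I` is a `v`-ideal and `A, B ⊆ R` satisfy `a * b ∈ I` for all `a ∈ A`, `b ∈ B`,
then all squares of elements of `A` lie in `I`, or all squares of elements of `B` do. -/
theorem vIdeal_squares {R K Γ₀ : Type*} [CommRing R] [IsDomain R] [Field K] [Algebra R K]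
    [IsFractionRing R K] [LinearOrderedCommGroupWithZero Γ₀] (v : Valuation K Γ₀)
    (hv : ∀ r : R, v (algebraMap R K r) ≤ 1) (I : Ideal R) (hI : IsVIdeal v hv I)
    (A B : Set R) (hAB : ∀ a ∈ A, ∀ b ∈ B, a * b ∈ I) :
    (∀ a ∈ A, a ^ 2 ∈ I) ∨ (∀ b ∈ B, b ^ 2 ∈ I) := by
  obtain ⟨J, rfl⟩ := hI
  have key : ∀ x y : R, x * y ∈ J.comap (Valuation.nonnegHom v hv) →
      v (algebraMap R K x) ≤ v (algebraMap R K y) →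
      x ^ 2 ∈ J.comap (Valuation.nonnegHom v hv) := by
    intro x y hxy hle
    rw [Ideal.mem_comap, map_mul] at hxy
    rw [Ideal.mem_comap, map_pow]
    have hd : Valuation.nonnegHom v hv y ∣ Valuation.nonnegHom v hv x :=
      (Valuation.integer.integers v).dvd_of_le hle
    obtain ⟨c, hc⟩ := hd
    have h : Valuation.nonnegHom v hv x ^ 2
        = c * (Valuation.nonnegHom v hv x * Valuation.nonnegHom v hv y) := by
      calc Valuation.nonnegHom v hv x ^ 2
          = Valuation.nonnegHom v hv x * Valuation.nonnegHom v hv x := sq _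
        _ = Valuation.nonnegHom v hv x * (Valuation.nonnegHom v hv y * c) := by rw [← hc]
        _ = _ := by ring
    rw [h]
    exact J.mul_mem_left c hxy
  by_contra hcon
  rw [not_or] at hcon
  obtain ⟨h1, h2⟩ := hcon
  push Not at h1 h2
  obtain ⟨a, ha, ha2⟩ := h1
  obtain ⟨b, hb, hb2⟩ := h2
  rcases le_total (v (algebraMap R K a)) (v (algebraMap R K b)) with h | h
  · exact ha2 (key a b (hAB a ha b hb) h)
  · exact hb2 (key b a (mul_comm a b ▸ hAB a ha b hb) h)
end

section
/- Let R be an integral domain with fraction field K. If every ideal of R is a valuation ideal, then R is itself a valuation ring of K, i.e. for every nonzero x ∈ K, x ∈ R or x⁻¹ ∈ R (equivalently, for all a, b ∈ R, a divides b or b divides a). -/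
/-- An ideal `I` of `R` is a *valuation ideal* (with respect to the field `K` of
fractions of `R`) if there exist a valuation overring `V` of `R` in `K` and an ideal
`J` of `V` such that `I = J ∩ R`. -/
def IsValuationIdeal {R : Type*} (K : Type*) [CommRing R] [Field K] [Algebra R K]
    (I : Ideal R) : Prop :=
  ∃ (V : ValuationSubring K) (hV : ∀ s : R, algebraMap R K s ∈ V) (J : Ideal V),
    ∀ r : R, r ∈ I ↔ (⟨algebraMap R K r, hV r⟩ : V) ∈ J

/-- If `b / a` lies in `V` and `(ab)` is contracted from `V`, then `a ∣ b`. -/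
theorem dvd_of_contracted {R K : Type*} [CommRing R] [IsDomain R]
    [Field K] [Algebra R K] [IsFractionRing R K] (a b : R) (ha : a ≠ 0) (hb : b ≠ 0)
    (V : ValuationSubring K) (hV : ∀ s : R, algebraMap R K s ∈ V) (J : Ideal V)
    (hJ : ∀ r : R, r ∈ Ideal.span {a * b} ↔ (⟨algebraMap R K r, hV r⟩ : V) ∈ J)
    (hc : algebraMap R K b / algebraMap R K a ∈ V) : a ∣ b := by
  have ha' : algebraMap R K a ≠ 0 := by simpa using ha
  have h1 := (hJ (a * b)).1 (Ideal.mem_span_singleton_self _)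
  have h2 := J.mul_mem_left ⟨_, hc⟩ h1
  have h3 : b * b ∈ Ideal.span {a * b} := by
    rw [hJ]
    convert h2 using 1
    apply Subtype.ext
    simp only [map_mul, MulMemClass.mk_mul_mk]
    field_simp
  exact (mul_dvd_mul_iff_right hb).1 (Ideal.mem_span_singleton.1 h3)

/-- If every ideal of an integral domain `R` is a valuation ideal, then `R` is itself
a valuation ring: for all `a b : R`, `a ∣ b` or `b ∣ a`. -/
theorem valuation_ring_of_all_ideals_valuation {R K : Type*} [CommRing R] [IsDomain R]
    [Field K] [Algebra R K] [IsFractionRing R K]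
    (h : ∀ I : Ideal R, IsValuationIdeal K I) :
    ∀ a b : R, a ∣ b ∨ b ∣ a := by
  intro a b
  by_cases ha : a = 0
  · exact Or.inr (ha ▸ dvd_zero b)
  by_cases hb : b = 0
  · exact Or.inl (hb ▸ dvd_zero a)
  obtain ⟨V, hV, J, hJ⟩ := h (Ideal.span {a * b})
  rcases V.mem_or_inv_mem (algebraMap R K b / algebraMap R K a) with hc | hc
  · exact Or.inl (dvd_of_contracted a b ha hb V hV J hJ hc)
  · rw [inv_div] at hc
    rw [mul_comm a b] at hJ
    exact Or.inr (dvd_of_contracted b a hb ha V hV J hJ hc)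
end

section
/- Let R be an integral domain with fraction field K and let v be a valuation on K nonnegative on R. (i) If I_1, …, I_n are v-ideals of R and x_i ∈ R \ I_i for each i ∈ {1, …, n}, then the product x_1⋯x_n does not belong to the product ideal I_1⋯I_n. (ii) If J is a v-ideal of R and I is an ideal of R with I^n ⊆ J^n for some positive integer n, then I ⊆ J. -/
theorem IsVIdeal.val_lt {R K Γ₀ : Type*} [CommRing R] [Field K] [Algebra R K]
    [LinearOrderedCommGroupWithZero Γ₀] (v : Valuation K Γ₀)
    (hv : ∀ r : R, v (algebraMap R K r) ≤ 1) (I : Ideal R) (hI : IsVIdeal v hv I)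
    {x a : R} (hx : x ∉ I) (ha : a ∈ I) : v (algebraMap R K a) < v (algebraMap R K x) := by
  obtain ⟨J, rfl⟩ := hI
  by_contra! h
  apply hx
  rw [Ideal.mem_comap] at ha ⊢
  by_cases h0 : algebraMap R K a = 0
  · have h1 : algebraMap R K x = 0 := by
      rw [h0, map_zero] at h
      simpa using le_antisymm h zero_le
    have h2 : Valuation.nonnegHom v hv x = 0 := Subtype.ext h1
    rw [h2]
    exact J.zero_mem
  · have hq : v (algebraMap R K x / algebraMap R K a) ≤ 1 := by
      rw [map_div₀]
      exact div_le_one_of_le₀ h zero_le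
    have h2 : Valuation.nonnegHom v hv x =
        (⟨algebraMap R K x / algebraMap R K a, hq⟩ : v.integer) * Valuation.nonnegHom v hv a :=
      Subtype.ext (div_mul_cancel₀ _ h0).symm
    rw [h2]
    exact J.mul_mem_left _ ha

theorem val_lt_prod {R K Γ₀ ι : Type*} [CommRing R] [Field K] [Algebra R K]
    [LinearOrderedCommGroupWithZero Γ₀] (v : Valuation K Γ₀) (I : ι → Ideal R) (c : ι → Γ₀)
    (h : ∀ i, ∀ a ∈ I i, v (algebraMap R K a) < c i) (s : Finset ι) (hs : s.Nonempty) :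
    ∀ z ∈ ∏ i ∈ s, I i, v (algebraMap R K z) < ∏ i ∈ s, c i := by
  induction hs using Finset.Nonempty.cons_induction with
  | singleton i => simpa using h i
  | cons i s hi hs ih =>
    intro z hz
    rw [Finset.prod_cons] at hz ⊢
    refine Submodule.mul_induction_on hz (fun a ha b hb => ?_) (fun a b ha hb => ?_)
    · rw [map_mul, map_mul]
      exact mul_lt_mul'' (h i a ha) (ih b hb) zero_le zero_le
    · rw [map_add]
      exact v.map_add_lt ha hb

/-- (i) If `I₁, …, Iₙ` are `v`-ideals and `xᵢ ∈ R \ Iᵢ` for each `i`, then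
`x₁ ⋯ xₙ ∉ I₁ ⋯ Iₙ`.  (ii) If `J` is a `v`-ideal and `Iⁿ ⊆ Jⁿ` for some `n ≥ 1`,
then `I ⊆ J`. -/
theorem vIdeal_prod_and_pow {R K Γ₀ : Type*} [CommRing R] [IsDomain R] [Field K]
    [Algebra R K] [IsFractionRing R K] [LinearOrderedCommGroupWithZero Γ₀]
    (v : Valuation K Γ₀) (hv : ∀ r : R, v (algebraMap R K r) ≤ 1) :
    (∀ (n : ℕ), 0 < n → ∀ (I : Fin n → Ideal R), (∀ i, IsVIdeal v hv (I i)) →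
      ∀ (x : Fin n → R), (∀ i, x i ∉ I i) → (∏ i, x i) ∉ ∏ i, I i) ∧
    (∀ (J : Ideal R), IsVIdeal v hv J → ∀ (I : Ideal R) (n : ℕ), 0 < n →
      I ^ n ≤ J ^ n → I ≤ J) := by
  have key : ∀ (n : ℕ), 0 < n → ∀ (I : Fin n → Ideal R), (∀ i, IsVIdeal v hv (I i)) →
      ∀ (x : Fin n → R), (∀ i, x i ∉ I i) → (∏ i, x i) ∉ ∏ i, I i := by
    intro n hn I hI x hx hmem
    have := val_lt_prod v I (fun i => v (algebraMap R K (x i)))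
      (fun i a ha => (hI i).val_lt v hv _ (hx i) ha) Finset.univ ⟨⟨0, hn⟩, Finset.mem_univ _⟩ _ hmem
    simp at this
  refine ⟨key, fun J hJ I n hn h x hx => ?_⟩
  by_contra hxJ
  have := key n hn (fun _ => J) (fun _ => hJ) (fun _ => x) (fun _ => hxJ)
  simp only [Finset.prod_const, Finset.card_univ, Fintype.card_fin] at this
  exact this (h (Ideal.pow_mem_pow hx n))
end

section
/- Let R be an integral domain with fraction field K, let v be a valuation on K nonnegative on R, and let I be a proper ideal of R such that I^n is a v-ideal of R for every positive integer n. Then the intersection ⋂_{n=1}^∞ I^n is a prime ideal of R. -/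
theorem IsVIdeal.mem_of_le {R K Γ₀ : Type*} [CommRing R] [Field K] [Algebra R K]
    [LinearOrderedCommGroupWithZero Γ₀] {v : Valuation K Γ₀}
    {hv : ∀ r : R, v (algebraMap R K r) ≤ 1} {I : Ideal R} (h : IsVIdeal v hv I)
    {x y : R} (hx : x ∈ I) (hxy : v (algebraMap R K y) ≤ v (algebraMap R K x)) : y ∈ I := by
  obtain ⟨J, rfl⟩ := h
  rw [Ideal.mem_comap] at hx ⊢
  have hd : Valuation.nonnegHom v hv x ∣ Valuation.nonnegHom v hv y :=
    (Valuation.integer.integers v).dvd_of_le hxy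
  exact J.mem_of_dvd hd hx

/-- If all powers of `I` are `v`-ideals and `a ^ 2` lies in all of them, so does `a`. -/
theorem mem_of_sq_mem_vIdeal {R K Γ₀ : Type*} [CommRing R] [IsDomain R] [Field K]
    [Algebra R K] [IsFractionRing R K] [LinearOrderedCommGroupWithZero Γ₀]
    (v : Valuation K Γ₀) (hv : ∀ r : R, v (algebraMap R K r) ≤ 1) (I : Ideal R)
    (hpow : ∀ n : ℕ, 0 < n → IsVIdeal v hv (I ^ n)) (a : R)
    (h : ∀ n : ℕ, a * a ∈ I ^ (n + 1)) (m : ℕ) : a ∈ I ^ (m + 1) := by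
  by_contra ha
  have hlt : ∀ x ∈ I ^ (m + 1), v (algebraMap R K x) < v (algebraMap R K a) := by
    intro x hx
    by_contra hc
    exact ha ((hpow _ m.succ_pos).mem_of_le hx (not_lt.mp hc))
  have h2 : a * a ∈ I ^ (m + 1) * I ^ (m + 1) := by
    rw [← pow_add]
    exact h (m + 1 + m)
  have key : ∀ z ∈ I ^ (m + 1) * I ^ (m + 1),
      v (algebraMap R K z) < v (algebraMap R K (a * a)) := by
    intro z hz
    refine Submodule.mul_induction_on hz ?_ ?_
    · intro x hx y hy
      simp only [map_mul]
      exact mul_lt_mul'' (hlt x hx) (hlt y hy) zero_le zero_le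
    · intro x y hx hy
      rw [map_add]
      exact v.map_add_lt hx hy
  exact lt_irrefl _ (key _ h2)

/-- If `I` is a proper ideal of `R` all of whose powers are `v`-ideals, then
`⋂ₙ Iⁿ` (intersection over `n ≥ 1`) is a prime ideal of `R`. -/
theorem iInf_pow_vIdeal_prime {R K Γ₀ : Type*} [CommRing R] [IsDomain R] [Field K]
    [Algebra R K] [IsFractionRing R K] [LinearOrderedCommGroupWithZero Γ₀]
    (v : Valuation K Γ₀) (hv : ∀ r : R, v (algebraMap R K r) ≤ 1) (I : Ideal R)
    (hproper : I ≠ ⊤) (hpow : ∀ n : ℕ, 0 < n → IsVIdeal v hv (I ^ n)) :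
    (⨅ n : ℕ, I ^ (n + 1)).IsPrime := by
  refine ⟨?_, ?_⟩
  · intro h
    apply hproper
    rw [eq_top_iff, ← h]
    exact (iInf_le _ 0).trans (by simp)
  · intro a b hab
    simp only [Ideal.mem_iInf] at hab ⊢
    rcases le_total (v (algebraMap R K a)) (v (algebraMap R K b)) with hle | hle
    · left
      refine mem_of_sq_mem_vIdeal v hv I hpow a fun n => ?_
      refine (hpow _ n.succ_pos).mem_of_le (hab n) ?_
      simp only [map_mul]
      gcongr
    · right
      refine mem_of_sq_mem_vIdeal v hv I hpow b fun n => ?_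
      refine (hpow _ n.succ_pos).mem_of_le (hab n) ?_
      simp only [map_mul]
      gcongr
end

section
/- Let R be a valuation domain (an integral domain in which, for all a, b ∈ R, a divides b or b divides a) and let P be a prime ideal of R. Then the intersection of all P-primary ideals of R is a prime ideal of R. -/
/-- In a valuation domain `R` (an integral domain in which, for all `a b : R`,
`a ∣ b` or `b ∣ a`), the intersection of all `P`-primary ideals, for a prime ideal
`P`, is a prime ideal. -/
theorem sInf_primary_isPrime_of_valuation_domain {R : Type*} [CommRing R] [IsDomain R]
    (hval : ∀ a b : R, a ∣ b ∨ b ∣ a) (P : Ideal R) (hP : P.IsPrime) :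
    (sInf {Q : Ideal R | Q.IsPrimary ∧ Q.radical = P}).IsPrime := by
  have hdvd : ∀ (Q : Ideal R) (x q : R), x ∉ Q → q ∈ Q → x ∣ q := by
    intro Q x q hx hq
    rcases hval x q with h | h
    · exact h
    · exact absurd (Q.mem_of_dvd h hq) hx
  -- the square of a `P`-primary ideal is `P`-primary
  have hsq : ∀ Q : Ideal R, Q.IsPrimary → Q.radical = P →
      (Q * Q).IsPrimary ∧ (Q * Q).radical = P := by
    intro Q hQ hr
    have hrad : (Q * Q).radical = P := by
      rw [Ideal.radical_mul, inf_idem, hr]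
    refine ⟨?_, hrad⟩
    rw [Ideal.isPrimary_iff] at hQ ⊢
    refine ⟨fun h => hQ.1 (top_le_iff.mp (h ▸ Ideal.mul_le_left)), ?_⟩
    intro a b hab
    rw [hrad]
    by_cases hb : b ∈ P
    · exact Or.inr hb
    left
    have hle : Q ≤ Ideal.span {b} * Q := by
      intro q hq
      obtain ⟨c, rfl⟩ := hdvd P b q hb (hr ▸ Ideal.le_radical hq)
      rw [Ideal.mem_span_singleton_mul]
      refine ⟨c, ?_, rfl⟩
      rw [mul_comm] at hq
      exact (hQ.2 hq).resolve_right (by rwa [hr])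
    have h2 : Q * Q ≤ Ideal.span {b} * (Q * Q) := by
      rw [← mul_assoc]
      exact Ideal.mul_mono_left hle
    obtain ⟨z, hz, hzb⟩ := Ideal.mem_span_singleton_mul.mp (h2 hab)
    have hb0 : b ≠ 0 := fun h => hb (h ▸ P.zero_mem)
    rw [mul_comm a b] at hzb
    exact mul_left_cancel₀ hb0 hzb ▸ hz
  refine ⟨fun h => hP.ne_top (top_le_iff.mp (h ▸ sInf_le ⟨hP.isPrimary, hP.radical⟩)), ?_⟩
  intro x y hxy
  by_contra! hcon
  obtain ⟨hx, hy⟩ := hcon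
  simp only [Ideal.mem_sInf, not_forall] at hx hy
  obtain ⟨Q₁, ⟨h1, h1r⟩, hx⟩ := hx
  obtain ⟨Q₂, ⟨h2, h2r⟩, hy⟩ := hy
  have hQ : (Q₁ ⊓ Q₂).IsPrimary := h1.inf h2 (h1r.trans h2r.symm)
  have hQr : (Q₁ ⊓ Q₂).radical = P := by rw [Ideal.radical_inf, h1r, h2r, inf_idem]
  have hmem := Ideal.mem_sInf.mp hxy (hsq _ hQ hQr)
  have hle : Q₁ ⊓ Q₂ ≤ Ideal.span {x} := fun q hq =>
    Ideal.mem_span_singleton.mpr (hdvd Q₁ x q hx hq.1)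
  obtain ⟨z, hz, hzx⟩ := Ideal.mem_span_singleton_mul.mp (Ideal.mul_mono_left hle hmem)
  have hx0 : x ≠ 0 := fun h => hx (h ▸ Q₁.zero_mem)
  exact hy (mul_left_cancel₀ hx0 hzx ▸ hz.2)
end

section
/- Let R be an integral domain with fraction field K and let Θ be a nonempty collection of proper valuation ideals of R such that for all I_1, I_2 ∈ Θ there exists I_3 ∈ Θ with I_3 ⊆ I_1 ∩ I_2. Then the radical √(⋂_{I ∈ Θ} I) is a prime ideal of R. -/
theorem IsValuationIdeal.sq_mem_or {R K : Type*} [CommRing R] [Field K] [Algebra R K]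
    {I : Ideal R} (h : IsValuationIdeal K I) {a b : R} (hab : a * b ∈ I) :
    a * a ∈ I ∨ b * b ∈ I := by
  obtain ⟨V, hV, J, hJ⟩ := h
  have key : ∀ a b : R, a * b ∈ I →
      (⟨algebraMap R K a, hV a⟩ : V) ∣ ⟨algebraMap R K b, hV b⟩ → b * b ∈ I := by
    rintro a b hab ⟨c, hc⟩
    rw [hJ] at hab ⊢
    have e : (⟨algebraMap R K (b * b), hV _⟩ : V) = c * ⟨algebraMap R K (a * b), hV _⟩ := by
      have hc' : algebraMap R K b = algebraMap R K a * (c : K) := congrArg Subtype.val hc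
      apply Subtype.ext
      change algebraMap R K (b * b) = (c : K) * algebraMap R K (a * b)
      rw [map_mul, map_mul]
      nth_rewrite 1 [hc']
      ring
    rw [e]
    exact J.mul_mem_left _ hab
  rcases ValuationRing.dvd_total (⟨algebraMap R K a, hV a⟩ : V) ⟨algebraMap R K b, hV b⟩ with h | h
  · exact Or.inr (key a b hab h)
  · exact Or.inl (key b a (by rwa [mul_comm]) h)

/-- If `Θ` is a nonempty, downward-directed collection of proper valuation ideals of
an integral domain `R`, then the radical of `⋂_{I ∈ Θ} I` is a prime ideal of `R`. -/
theorem radical_sInf_valuation_ideals_prime {R K : Type*} [CommRing R] [IsDomain R]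
    [Field K] [Algebra R K] [IsFractionRing R K] (Θ : Set (Ideal R))
    (hne : Θ.Nonempty) (hval : ∀ I ∈ Θ, I ≠ ⊤ ∧ IsValuationIdeal K I)
    (hdir : ∀ I₁ ∈ Θ, ∀ I₂ ∈ Θ, ∃ I₃ ∈ Θ, I₃ ≤ I₁ ⊓ I₂) :
    (sInf Θ).radical.IsPrime := by
  refine ⟨?_, ?_⟩
  · intro h
    obtain ⟨I, hI⟩ := hne
    rw [Ideal.radical_eq_top] at h
    exact (hval I hI).1 (top_le_iff.mp (h ▸ sInf_le hI))
  · rintro x y ⟨n, hn⟩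
    by_contra hcon
    rw [not_or] at hcon
    have aux : ∀ z : R, z ∉ (sInf Θ).radical → ∃ I ∈ Θ, z ^ n * z ^ n ∉ I := by
      intro z hz
      by_contra! hall
      refine hz ⟨n + n, ?_⟩
      rw [pow_add]
      exact Ideal.mem_sInf.mpr fun {I} hI => hall I hI
    obtain ⟨I₁, h₁, hx⟩ := aux x hcon.1
    obtain ⟨I₂, h₂, hy⟩ := aux y hcon.2
    obtain ⟨I₃, h₃, hle⟩ := hdir I₁ h₁ I₂ h₂
    rw [mul_pow] at hn
    rcases (hval I₃ h₃).2.sq_mem_or (Ideal.mem_sInf.mp hn h₃) with h | h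
    · exact hx (hle h).1
    · exact hy (hle h).2
end

section
/- Let R be a local integral domain with maximal ideal M and fraction field K. If every M-primary ideal of R is a valuation ideal, then the set of M-primary ideals of R is totally ordered by inclusion and the intersection of all M-primary ideals of R is a prime ideal of R. -/
theorem aux_val {R K : Type*} [CommRing R] [Field K] [Algebra R K] {I : Ideal R}
    (h : IsValuationIdeal K I) :
    ∃ V : ValuationSubring K, ∀ x y : R, x ∈ I →
      V.valuation.comap (algebraMap R K) y ≤ V.valuation.comap (algebraMap R K) x → y ∈ I := by
  obtain ⟨V, hV, J, hJ⟩ := h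
  refine ⟨V, fun x y hx hyx => ?_⟩
  rw [Valuation.comap_apply, Valuation.comap_apply] at hyx
  rw [hJ] at hx ⊢
  by_cases hx0 : algebraMap R K x = 0
  · have : algebraMap R K y = 0 := by simpa [hx0] using hyx
    have e : (⟨algebraMap R K y, hV y⟩ : V) = 0 := Subtype.ext this
    rw [e]; exact J.zero_mem
  · have hm : algebraMap R K y / algebraMap R K x ∈ V := by
      rw [← V.valuation_le_one_iff, map_div₀]
      exact div_le_one_of_le₀ hyx zero_le
    have e : (⟨algebraMap R K y, hV y⟩ : V) =
        ⟨algebraMap R K y / algebraMap R K x, hm⟩ * ⟨algebraMap R K x, hV x⟩ := by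
      apply Subtype.ext
      change _ = algebraMap R K y / algebraMap R K x * algebraMap R K x
      field_simp
    rw [e]; exact J.mul_mem_left _ hx

theorem aux_mul {R K : Type*} [CommRing R] [Field K] [Algebra R K] {I : Ideal R}
    (h : IsValuationIdeal K I) {x y : R} (hx : x * x ∈ I) (hy : y * y ∈ I) : x * y ∈ I := by
  obtain ⟨V, hV⟩ := aux_val h
  set v := V.valuation.comap (algebraMap R K)
  rcases le_total (v x) (v y) with hl | hl
  · refine hV _ _ hy ?_
    rw [map_mul, map_mul]; gcongr
  · refine hV _ _ hx ?_
    rw [map_mul, map_mul]; gcongr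

theorem aux_sq {R K : Type*} [CommRing R] [Field K] [Algebra R K] {I : Ideal R}
    (h : IsValuationIdeal K I) {x y : R} (hx : x * y ∈ I) : x * x ∈ I ∨ y * y ∈ I := by
  obtain ⟨V, hV⟩ := aux_val h
  set v := V.valuation.comap (algebraMap R K)
  rcases le_total (v x) (v y) with hl | hl
  · refine .inl (hV _ _ hx ?_)
    rw [map_mul, map_mul]; gcongr
  · refine .inr (hV _ _ hx ?_)
    rw [map_mul, map_mul]; gcongr

theorem aux_int {R K : Type*} [CommRing R] [Field K] [Algebra R K] {I : Ideal R}
    (h : IsValuationIdeal K I) {y i j : R} (hi : i ∈ I) (hj : j ∈ I * I)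
    (e : y * y = y * i + j) : y ∈ I := by
  obtain ⟨V, hV⟩ := aux_val h
  set v := V.valuation.comap (algebraMap R K)
  by_contra hy
  have hlt : ∀ x ∈ I, v x < v y := fun x hx => by
    by_contra hc
    exact hy (hV x y hx (not_lt.mp hc))
  have hpos : 0 < v y := lt_of_le_of_lt zero_le (hlt i hi)
  have hjl : v j < v y * v y := by
    refine Submodule.mul_induction_on hj (fun a ha b hb => ?_) (fun a b ha hb => ?_)
    · rw [map_mul]; exact mul_lt_mul'' (hlt a ha) (hlt b hb) zero_le zero_le
    · exact v.map_add_lt ha hb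
  have hil : v (y * i) < v y * v y := by
    rw [map_mul]
    exact mul_lt_mul_of_pos_left (hlt i hi) hpos
  have := v.map_add_lt hil hjl
  rw [← e, map_mul] at this
  exact lt_irrefl _ this

/-- Let `R` be a local integral domain with maximal ideal `M` and fraction field `K`.
If every `M`-primary ideal of `R` is a valuation ideal, then the set of `M`-primary
ideals is totally ordered by inclusion and their intersection is a prime ideal. -/
theorem primary_valuation_ideals_totally_ordered {R K : Type*} [CommRing R] [IsDomain R]
    [IsLocalRing R] [Field K] [Algebra R K] [IsFractionRing R K]
    (h : ∀ Q : Ideal R, Q.IsPrimary → Q.radical = IsLocalRing.maximalIdeal R →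
      IsValuationIdeal K Q) :
    (∀ Q₁ Q₂ : Ideal R,
        Q₁.IsPrimary → Q₁.radical = IsLocalRing.maximalIdeal R →
        Q₂.IsPrimary → Q₂.radical = IsLocalRing.maximalIdeal R →
        Q₁ ≤ Q₂ ∨ Q₂ ≤ Q₁) ∧
    (sInf {Q : Ideal R |
        Q.IsPrimary ∧ Q.radical = IsLocalRing.maximalIdeal R}).IsPrime := by
  set M := IsLocalRing.maximalIdeal R with hM
  have hMp : M.IsPrime := (IsLocalRing.maximalIdeal.isMaximal R).isPrime
  have prim : ∀ Q : Ideal R, Q.radical = M → Q.IsPrimary := fun Q hQ =>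
    Ideal.isPrimary_of_isMaximal_radical (hQ ▸ IsLocalRing.maximalIdeal.isMaximal R)
  have val : ∀ Q : Ideal R, Q.radical = M → IsValuationIdeal K Q := fun Q hQ => h Q (prim Q hQ) hQ
  have radinf : ∀ Q Q' : Ideal R, Q.radical = M → Q'.radical = M → (Q ⊓ Q').radical = M := by
    intro Q Q' h1 h2
    rw [Ideal.radical_inf, h1, h2, inf_idem]
  have radmul : ∀ Q Q' : Ideal R, Q.radical = M → Q'.radical = M → (Q * Q').radical = M := by
    intro Q Q' h1 h2
    rw [Ideal.radical_mul, h1, h2, inf_idem]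
  have radsup : ∀ Q I : Ideal R, Q.radical = M → I ≤ M → (I ⊔ Q).radical = M := by
    intro Q I h1 h2
    apply le_antisymm
    · rw [hMp.radical_le_iff]
      exact sup_le h2 (h1 ▸ Ideal.le_radical)
    · rw [← h1]
      exact Ideal.radical_mono le_sup_right
  have hle : ∀ Q : Ideal R, Q.radical = M → Q ≤ M := fun Q hQ => hQ ▸ Ideal.le_radical
  have memN : ∀ x : R, x ∈ sInf {Q : Ideal R | Q.IsPrimary ∧ Q.radical = M} ↔
      ∀ Q : Ideal R, Q.radical = M → x ∈ Q := by
    intro x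
    rw [Submodule.mem_sInf]
    exact ⟨fun hx Q hQ => hx Q ⟨prim Q hQ, hQ⟩, fun hx Q hQ => hx Q hQ.2⟩
  have sqN : ∀ x : R, (∀ Q : Ideal R, Q.radical = M → x * x ∈ Q) →
      ∀ Q : Ideal R, Q.radical = M → x ∈ Q := by
    intro x hx Q hQ
    exact aux_int (val Q hQ) Q.zero_mem (hx _ (radmul Q Q hQ hQ)) (by ring)
  have hN : (sInf {Q : Ideal R | Q.IsPrimary ∧ Q.radical = M}).IsPrime := by
    refine ⟨?_, ?_⟩
    · intro ht
      have h1 := (memN 1).1 (ht ▸ Submodule.mem_top) M hMp.radical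
      exact hMp.ne_top ((Ideal.eq_top_iff_one _).2 h1)
    · intro x y hxy
      rw [memN] at hxy
      rw [memN, memN]
      by_cases hx : ∀ Q : Ideal R, Q.radical = M → x * x ∈ Q
      · exact .inl (sqN x hx)
      · right
        push Not at hx
        obtain ⟨Q1, hQ1, hx1⟩ := hx
        refine sqN y fun Q hQ => ?_
        rcases aux_sq (val _ (radinf Q1 Q hQ1 hQ)) (hxy _ (radinf Q1 Q hQ1 hQ)) with h1 | h1
        · exact absurd h1.1 hx1
        · exact h1.2
  refine ⟨?_, hN⟩
  intro Q₁ Q₂ _ h1 _ h2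
  by_contra hc
  rw [not_or, SetLike.not_le_iff_exists, SetLike.not_le_iff_exists] at hc
  obtain ⟨⟨a, ha1, ha2⟩, b, hb2, hb1⟩ := hc
  have haM : a ∈ M := hle _ h1 ha1
  have hbM : b ∈ M := hle _ h2 hb2
  -- the key step, stated symmetrically in the two elements
  have key : ∀ (A B r s q : R) (P Q' : Ideal R), Q'.radical = M → B ∈ M → A ∈ P → B ∉ P →
      Q' ≤ P → q ∈ Q' * Q' → A * B = r * (A * A) + s * (B * B) + q →
      ∃ u ∈ M, ∃ q' ∈ Q', r * A = u * B + q' := by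
    intro A B r s q P Q' hQ' hB hA hBP hP hq e
    have hI : (Ideal.span {B} ⊔ Q').radical = M :=
      radsup Q' _ hQ' ((Ideal.span_singleton_le_iff_mem _).2 hB)
    have hBI : B ∈ Ideal.span {B} ⊔ Q' := Ideal.mem_sup_left (Ideal.mem_span_singleton_self B)
    have hm : r * A ∈ Ideal.span {B} ⊔ Q' := by
      refine aux_int (val _ hI) (i := B) (j := -(r * s) * (B * B) + (-r) * q) hBI ?_ ?_
      · exact add_mem (Ideal.mul_mem_left _ _ (Ideal.mul_mem_mul hBI hBI))
          (Ideal.mul_mem_left _ _ (Ideal.mul_mono le_sup_right le_sup_right hq))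
      · linear_combination (-r) * e
    obtain ⟨u, q', hq', e'⟩ := Ideal.mem_span_singleton_sup.1 hm
    refine ⟨u, ?_, q', hq', e'.symm⟩
    by_contra hu
    have hu' : IsUnit u := by
      by_contra hn
      exact hu ((IsLocalRing.mem_maximalIdeal u).2 hn)
    apply hBP
    rw [← Ideal.unit_mul_mem_iff_mem P hu']
    have : u * B = r * A - q' := by linear_combination e'
    rw [this]
    exact sub_mem (Ideal.mul_mem_left _ _ hA) (hP hq')
  have hab : ∀ Q : Ideal R, Q.radical = M → a * b ∈ Q := by
    intro Q hQ
    set Q' := Q ⊓ (Q₁ ⊓ Q₂) with hQ'def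
    have hQ' : Q'.radical = M := radinf _ _ hQ (radinf _ _ h1 h2)
    have hL : Ideal.span {a * a, b * b} ≤ M := by
      rw [Ideal.span_le]
      rintro z (rfl | rfl)
      · exact M.mul_mem_left _ haM
      · exact M.mul_mem_left _ hbM
    have hS := radsup (Q' * Q') _ (radmul _ _ hQ' hQ') hL
    have hmem : a * b ∈ Ideal.span {a * a, b * b} ⊔ Q' * Q' :=
      aux_mul (val _ hS) (Ideal.mem_sup_left (Ideal.subset_span (by simp)))
        (Ideal.mem_sup_left (Ideal.subset_span (by simp)))
    obtain ⟨z, hz, q, hq, e⟩ := Submodule.mem_sup.1 hmem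
    obtain ⟨r, s, e2⟩ := Ideal.mem_span_pair.1 hz
    have e3 : a * b = r * (a * a) + s * (b * b) + q := by rw [e2, e]
    obtain ⟨u, hu, q1, hq1, f1⟩ := key a b r s q Q₁ Q' hQ' hbM ha1 hb1
      (inf_le_right.trans inf_le_left) hq e3
    obtain ⟨w, hw, q2, hq2, f2⟩ := key b a s r q Q₂ Q' hQ' haM hb2 ha2
      (inf_le_right.trans inf_le_right) hq (by linear_combination e3)
    have hunit : IsUnit (1 - (u + w)) := by
      by_contra hn
      have h3 : 1 - (u + w) ∈ M := (IsLocalRing.mem_maximalIdeal _).2 hn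
      have h4 := M.add_mem h3 (M.add_mem hu hw)
      rw [sub_add_cancel] at h4
      exact hMp.ne_top ((Ideal.eq_top_iff_one _).2 h4)
    have hfin : a * b ∈ Q' := by
      rw [← Ideal.unit_mul_mem_iff_mem Q' hunit]
      have : (1 - (u + w)) * (a * b) = a * q1 + b * q2 + q := by
        linear_combination e3 + a * f1 + b * f2
      rw [this]
      exact add_mem (add_mem (Q'.mul_mem_left _ hq1) (Q'.mul_mem_left _ hq2)) (Ideal.mul_le_left hq)
    exact hfin.1
  rcases hN.mem_or_mem ((memN _).2 hab) with h3 | h3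
  · exact ha2 ((memN _).1 h3 _ h2)
  · exact hb1 ((memN _).1 h3 _ h1)
end
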